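/- In the algebra ⋀V ⊗ End(P), the following commutation relations hold: [τ, Θ₋] = 0, [τ, Θ₊] = 0, and [Θ₊, Θ₋] = 2τ², where [X,Y] := XY − YX. -/

import Mathlib

open Matrix MvPolynomial TensorProduct

noncomputable section

/-- Index set for entries `x_{i,j}` with `i < j`. -/
abbrev Idx (n : ℕ) := {p : Fin n × Fin n // p.1 < p.2}

/-- Polynomial algebra on the space of alternating `n × n` matrices. -/
abbrev P (n : ℕ) := MvPolynomial (Idx n) ℂ

/-- Multiplication operator `M_{i,j}` (with `M_{j,i} = -M_{i,j}`, `M_{i,i} = 0`). -/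
def Mop (n : ℕ) (i j : Fin n) : Module.End ℂ (P n) :=
  if h : i < j then LinearMap.mulLeft ℂ (X ⟨(i, j), h⟩)
  else if h' : j < i then -LinearMap.mulLeft ℂ (X ⟨(j, i), h'⟩ : P n)
  else 0

/-- Derivation `D_{i,j} = ∂/∂x_{i,j}` (with `D_{j,i} = -D_{i,j}`, `D_{i,i} = 0`). -/
def Dop (n : ℕ) (i j : Fin n) : Module.End ℂ (P n) :=
  if h : i < j then ((pderiv ⟨(i, j), h⟩ : Derivation ℂ (P n) (P n)) : P n →ₗ[ℂ] P n)
  else if h' : j < i then -((pderiv ⟨(j, i), h'⟩ : Derivation ℂ (P n) (P n)) : P n →ₗ[ℂ] P n)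
  else 0

/-- `2n`-dimensional vector space with basis indexed by `Fin n ⊕ Fin n`
(`Sum.inl i ↦ e_{i+1}`, `Sum.inr i ↦ e_{-(i+1)}`). -/
abbrev V (n : ℕ) := (Fin n ⊕ Fin n) → ℂ

/-- The tensor product algebra `⋀V ⊗ End(P)`. -/
abbrev ExtEnd (n : ℕ) := ExteriorAlgebra ℂ (V n) ⊗[ℂ] Module.End ℂ (P n)

/-- The basis vectors `e_i` in the exterior algebra. -/
def e (n : ℕ) (v : Fin n ⊕ Fin n) : ExteriorAlgebra ℂ (V n) :=
  ExteriorAlgebra.ι ℂ (Pi.single v 1)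

/-- `τ = Σ_i e_i e_{−i} ⊗ 1`. -/
def tau (n : ℕ) : ExtEnd n := ∑ i : Fin n, (e n (.inl i) * e n (.inr i)) ⊗ₜ[ℂ] 1

/-- `Θ₋ = Σ_{i,j} e_i e_j ⊗ M_{i,j}`. -/
def ThetaMinus (n : ℕ) : ExtEnd n :=
  ∑ i : Fin n, ∑ j : Fin n, (e n (.inl i) * e n (.inl j)) ⊗ₜ[ℂ] Mop n i j

/-- `Θ₊ = Σ_{i,j} e_{−j} e_{−i} ⊗ D_{i,j}`. -/
def ThetaPlus (n : ℕ) : ExtEnd n :=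
  ∑ i : Fin n, ∑ j : Fin n, (e n (.inr j) * e n (.inr i)) ⊗ₜ[ℂ] Dop n i j

theorem e_anti (n : ℕ) (a b : Fin n ⊕ Fin n) : e n a * e n b = -(e n b * e n a) :=
  eq_neg_of_add_eq_zero_left (ExteriorAlgebra.ι_add_mul_swap _ _)

theorem e_comm1 (n : ℕ) (a b c : Fin n ⊕ Fin n) :
    e n a * (e n b * e n c) = (e n b * e n c) * e n a := by
  rw [← mul_assoc, e_anti n a b, neg_mul, mul_assoc, e_anti n a c, mul_neg, neg_neg, mul_assoc]

theorem e_comm2 (n : ℕ) (a b c d : Fin n ⊕ Fin n) :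
    (e n a * e n b) * (e n c * e n d) = (e n c * e n d) * (e n a * e n b) := by
  rw [mul_assoc, e_comm1 n b c d, ← mul_assoc, e_comm1 n a c d, mul_assoc]

theorem pderiv_comm (n : ℕ) (p q : Idx n) :
    ((pderiv p : Derivation ℂ (P n) (P n)) : P n →ₗ[ℂ] P n) * LinearMap.mulLeft ℂ (X q : P n)
      = LinearMap.mulLeft ℂ (X q : P n) *
          ((pderiv p : Derivation ℂ (P n) (P n)) : P n →ₗ[ℂ] P n)
        + (if p = q then (1 : Module.End ℂ (P n)) else 0) := by
  refine LinearMap.ext fun f => ?_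
  by_cases h : p = q
  · subst h
    simp [Derivation.leibniz, pderiv_X]
  · simp [Derivation.leibniz, pderiv_X, h, Ne.symm h]

theorem end_mul_neg (n : ℕ) (A B : Module.End ℂ (P n)) : A * -B = -(A * B) :=
  LinearMap.ext fun f => by
    simp only [Module.End.mul_apply, LinearMap.neg_apply, map_neg]

theorem end_neg_mul (n : ℕ) (A B : Module.End ℂ (P n)) : -A * B = -(A * B) :=
  LinearMap.ext fun f => by
    simp only [Module.End.mul_apply, LinearMap.neg_apply]

theorem Mop_swap (n : ℕ) (i j : Fin n) : Mop n i j = -Mop n j i := by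
  unfold Mop
  rcases lt_trichotomy i j with h | h | h
  · rw [dif_pos h, dif_neg h.not_gt, dif_pos h]
    exact (neg_neg _).symm
  · subst h
    simp
  · rw [dif_neg h.not_gt, dif_pos h, dif_pos h]

theorem Dop_swap (n : ℕ) (i j : Fin n) : Dop n i j = -Dop n j i := by
  unfold Dop
  rcases lt_trichotomy i j with h | h | h
  · rw [dif_pos h, dif_neg h.not_gt, dif_pos h]
    exact (neg_neg _).symm
  · subst h
    simp
  · rw [dif_neg h.not_gt, dif_pos h, dif_pos h]

theorem DM_comm_lt (n : ℕ) (i j k l : Fin n) (h : i < j) (h' : k < l) :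
    Dop n i j * Mop n k l = Mop n k l * Dop n i j
      + ((if i = k ∧ j = l then (1 : Module.End ℂ (P n)) else 0)
        - (if i = l ∧ j = k then (1 : Module.End ℂ (P n)) else 0)) := by
  rw [if_neg (c := i = l ∧ j = k) (by omega), sub_zero]
  unfold Dop Mop
  rw [dif_pos h, dif_pos h', pderiv_comm]
  simp only [Subtype.mk.injEq, Prod.mk.injEq]

theorem DM_comm (n : ℕ) (i j k l : Fin n) :
    Dop n i j * Mop n k l = Mop n k l * Dop n i j
      + ((if i = k ∧ j = l then (1 : Module.End ℂ (P n)) else 0)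
        - (if i = l ∧ j = k then (1 : Module.End ℂ (P n)) else 0)) := by
  have hM : ∀ k, Mop n k k = 0 := fun k => by simp [Mop]
  have hD : ∀ k, Dop n k k = 0 := fun k => by simp [Dop]
  have step : ∀ i j k l, i < j → Dop n i j * Mop n k l = Mop n k l * Dop n i j
      + ((if i = k ∧ j = l then (1 : Module.End ℂ (P n)) else 0)
        - (if i = l ∧ j = k then (1 : Module.End ℂ (P n)) else 0)) := by
    intro i j k l h
    rcases lt_trichotomy k l with h' | h' | h'
    · exact DM_comm_lt n i j k l h h'
    · subst h'
      simp [hM]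
    · rw [Mop_swap n k l, end_mul_neg, end_neg_mul, DM_comm_lt n i j l k h h']
      abel
  rcases lt_trichotomy i j with h | h | h
  · exact step i j k l h
  · subst h
    simp [hD, and_comm]
  · rw [Dop_swap n i j, end_mul_neg, end_neg_mul, step j i k l h]
    simp only [and_comm]
    abel

/-- Commutation relations: `[τ, Θ₋] = 0`, `[τ, Θ₊] = 0`, `[Θ₊, Θ₋] = 2τ²`. -/
theorem commutation_relations (n : ℕ) (hn : 1 ≤ n) :
    tau n * ThetaMinus n - ThetaMinus n * tau n = 0 ∧
    tau n * ThetaPlus n - ThetaPlus n * tau n = 0 ∧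
    ThetaPlus n * ThetaMinus n - ThetaMinus n * ThetaPlus n = 2 * tau n ^ 2 := by
  refine ⟨?_, ?_, ?_⟩
  · rw [sub_eq_zero]
    unfold tau ThetaMinus
    refine Commute.sum_left _ _ _ fun i _ => Commute.sum_right _ _ _ fun j _ =>
      Commute.sum_right _ _ _ fun k _ => ?_
    simp only [Commute, SemiconjBy, Algebra.TensorProduct.tmul_mul_tmul, one_mul, mul_one]
    rw [e_comm2]
  · rw [sub_eq_zero]
    unfold tau ThetaPlus
    refine Commute.sum_left _ _ _ fun i _ => Commute.sum_right _ _ _ fun j _ =>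
      Commute.sum_right _ _ _ fun k _ => ?_
    simp only [Commute, SemiconjBy, Algebra.TensorProduct.tmul_mul_tmul, one_mul, mul_one]
    rw [e_comm2]
  · have h1 : ThetaPlus n * ThetaMinus n = ∑ i, ∑ j, ∑ k, ∑ l,
        ((e n (.inr j) * e n (.inr i)) * (e n (.inl k) * e n (.inl l))) ⊗ₜ[ℂ]
          (Dop n i j * Mop n k l) := by
      simp only [ThetaPlus, ThetaMinus, Finset.sum_mul]
      simp only [Finset.mul_sum, Algebra.TensorProduct.tmul_mul_tmul]
    have h2 : ThetaMinus n * ThetaPlus n = ∑ i, ∑ j, ∑ k, ∑ l,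
        ((e n (.inr j) * e n (.inr i)) * (e n (.inl k) * e n (.inl l))) ⊗ₜ[ℂ]
          (Mop n k l * Dop n i j) := by
      simp only [ThetaPlus, ThetaMinus, Finset.mul_sum]
      simp only [Finset.sum_mul, Algebra.TensorProduct.tmul_mul_tmul, e_comm2 n (.inl _) (.inl _)]
    have key : ∀ i j : Fin n, (e n (.inr j) * e n (.inr i)) * (e n (.inl i) * e n (.inl j))
        = (e n (.inl i) * e n (.inr i)) * (e n (.inl j) * e n (.inr j)) := by
      intro i j
      rw [mul_assoc, ← mul_assoc (e n (.inr i)), ← e_comm1, ← mul_assoc, e_comm2,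
        e_anti n (.inr i), e_anti n (.inr j), neg_mul_neg]
    have key' : ∀ i j : Fin n, (e n (.inr j) * e n (.inr i)) * (e n (.inl j) * e n (.inl i))
        = -((e n (.inl i) * e n (.inr i)) * (e n (.inl j) * e n (.inr j))) := by
      intro i j
      rw [e_anti n (.inl j), mul_neg, key]
    have h3 : tau n ^ 2 = ∑ i, ∑ j,
        ((e n (.inl i) * e n (.inr i)) * (e n (.inl j) * e n (.inr j))) ⊗ₜ[ℂ] 1 := by
      simp only [sq, tau, Finset.sum_mul]
      simp only [Finset.mul_sum, Algebra.TensorProduct.tmul_mul_tmul, mul_one]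
    rw [h1, h2, h3]
    simp only [← Finset.sum_sub_distrib, ← tmul_sub, DM_comm, add_sub_cancel_left, Finset.mul_sum]
    refine Finset.sum_congr rfl fun i _ => Finset.sum_congr rfl fun j _ => ?_
    simp only [tmul_sub, Finset.sum_sub_distrib]
    have a1 : (∑ k, ∑ l, ((e n (.inr j) * e n (.inr i)) * (e n (.inl k) * e n (.inl l))) ⊗ₜ[ℂ]
        (if i = k ∧ j = l then (1 : Module.End ℂ (P n)) else 0)) =
        ((e n (.inl i) * e n (.inr i)) * (e n (.inl j) * e n (.inr j))) ⊗ₜ[ℂ] 1 := by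
      rw [Finset.sum_eq_single i, Finset.sum_eq_single j]
      · simp [key]
      · intro l _ hl
        simp [hl.symm]
      · simp
      · intro k _ hk
        simp [hk.symm]
      · simp
    have a2 : (∑ k, ∑ l, ((e n (.inr j) * e n (.inr i)) * (e n (.inl k) * e n (.inl l))) ⊗ₜ[ℂ]
        (if i = l ∧ j = k then (1 : Module.End ℂ (P n)) else 0)) =
        -(((e n (.inl i) * e n (.inr i)) * (e n (.inl j) * e n (.inr j))) ⊗ₜ[ℂ] 1) := by
      rw [Finset.sum_eq_single j, Finset.sum_eq_single i]
      · simp [key', neg_tmul]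
      · intro l _ hl
        simp [hl.symm]
      · simp
      · intro k _ hk
        simp [hk.symm]
      · simp
    rw [a1, a2, sub_neg_eq_add, two_mul]

end
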